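/- Let p(β) = e^{-βE₀}/(e^{-βE₀}+e^{-βE₁}) and q(β) = 1 − p(β), with E₁ = E₀ + Δ, Δ > 0. For two pure states families with overlaps F₀⁺(δ) = 1 − χ₀⁺ δ²/2 + o(δ²) and F₀⁻(δ) = 1 − χ₀⁻ δ²/2 + o(δ²), and gap function Δ(δ) differentiable at 0 with Δ(0)=Δ, the function F(δ) = F₀⁺(δ)/sqrt((1+e^{-βΔ(0)})(1+e^{-βΔ(δ)})) · (stuff)... Specifically: F(δ) = F₀⁺(δ)/[sqrt(1+e^{-βΔ})sqrt(1+e^{-βΔ(δ)})] + F₀⁻(δ)/[sqrt(1+e^{βΔ})sqrt(1+e^{βΔ(δ)})] satisfies F(0) = 1 and −F''(0) = χ₀⁺/(1+e^{-βΔ}) + χ₀⁻/(1+e^{βΔ}) + (β²Δ'(0)²/16)·[ (e^{βΔ}(8 e^{βΔ} − 4))/( (e^{βΔ}+1)³ ) + (e^{-βΔ}(8 e^{-βΔ} −4))/((e^{-βΔ}+1)³) ]·... equivalently, −F''(0) = χ₀⁺/(1+e^{-βΔ}) + χ₀⁻/(1+e^{βΔ}) + R where R = β²Δ'(0)² [ e^{βΔ}/(2(e^{βΔ}+1)²)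 − 3e^{βΔ}/(4(e^{βΔ}+1)³) + e^{-βΔ}/(2(e^{-βΔ}+1)²) − 3e^{-βΔ}/(4(e^{-βΔ}+1)³) ]. -/

import Mathlib

open Real

/-- Second-order data of one sector term. -/
theorem tla_term (c χ : ℝ) (f d : ℝ → ℝ)
    (hf : ContDiffAt ℝ 2 f 0) (hd : ContDiffAt ℝ 2 d 0)
    (hf0 : f 0 = 1) (hf1 : deriv f 0 = 0) (hf2 : iteratedDeriv 2 f 0 = -χ) :
    let G : ℝ → ℝ := fun x =>
      f x / (Real.sqrt (1 + Real.exp (c * d 0)) * Real.sqrt (1 + Real.exp (c * d x)))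
    ContDiffAt ℝ 2 G 0 ∧ G 0 = 1 / (1 + Real.exp (c * d 0)) ∧
    iteratedDeriv 2 G 0 = -χ / (1 + Real.exp (c * d 0)) -
      1 / 2 * (c * iteratedDeriv 2 d 0 + (c * deriv d 0) ^ 2) * Real.exp (c * d 0) /
        (1 + Real.exp (c * d 0)) ^ 2 +
      3 / 4 * (c * deriv d 0) ^ 2 * Real.exp (c * d 0) ^ 2 / (1 + Real.exp (c * d 0)) ^ 3 := by
  intro G
  have hpos : ∀ x, 0 < 1 + Real.exp (c * d x) := fun x => by positivity
  have hspos : ∀ x, 0 < Real.sqrt (1 + Real.exp (c * d x)) := fun x => Real.sqrt_pos.2 (hpos x)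
  have key : ∀ x f' d', HasDerivAt f f' x → HasDerivAt d d' x →
      HasDerivAt (fun x => Real.sqrt (1 + Real.exp (c * d x)))
        (Real.exp (c * d x) * (c * d') / (2 * Real.sqrt (1 + Real.exp (c * d x)))) x := by
    intro x f' d' h1 h2
    exact (((h2.const_mul c).exp).const_add 1).sqrt (hpos x).ne'
  refine ⟨?_, ?_, ?_⟩
  · apply hf.div
    · exact contDiffAt_const.mul
        ((contDiffAt_const.add (contDiffAt_const.mul hd).exp).sqrt (hpos 0).ne')
    · exact (mul_pos (hspos 0) (hspos 0)).ne'
  · simp only [G]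
    rw [Real.mul_self_sqrt (hpos 0).le, hf0]
  · have ef : ∀ᶠ x in nhds (0 : ℝ), HasDerivAt f (deriv f x) x := by
      filter_upwards [hf.eventually (by simp)] with x hx
      exact (hx.differentiableAt (by norm_num)).hasDerivAt
    have ed : ∀ᶠ x in nhds (0 : ℝ), HasDerivAt d (deriv d x) x := by
      filter_upwards [hd.eventually (by simp)] with x hx
      exact (hx.differentiableAt (by norm_num)).hasDerivAt
    have two : ∀ g : ℝ → ℝ, ContDiffAt ℝ 2 g 0 →
        HasDerivAt (deriv g) (iteratedDeriv 2 g 0) 0 := by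
      intro g hg
      have h : ContDiffAt ℝ 1 (deriv g) 0 :=
        (hg.fderiv_right (m := 1) (by norm_num)).clm_apply contDiffAt_const
      rw [iteratedDeriv_succ, iteratedDeriv_one]
      exact (h.differentiableAt (by norm_num)).hasDerivAt
    have f2 := two f hf
    have d2 := two d hd
    rw [hf2] at f2
    have s1 := key 0 _ _ ef.self_of_nhds ed.self_of_nhds
    have eG : deriv G =ᶠ[nhds 0] fun x =>
        (deriv f x * Real.sqrt (1 + Real.exp (c * d x)) -
          f x * (Real.exp (c * d x) * (c * deriv d x) /
            (2 * Real.sqrt (1 + Real.exp (c * d x))))) /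
          (Real.sqrt (1 + Real.exp (c * d 0)) * (1 + Real.exp (c * d x))) := by
      filter_upwards [ef, ed] with x h1 h2
      have h := h1.div ((key x _ _ h1 h2).const_mul (Real.sqrt (1 + Real.exp (c * d 0))))
        (mul_pos (hspos 0) (hspos x)).ne'
      refine h.deriv.trans ?_
      have a := (hspos 0).ne'
      have b := (hspos x).ne'
      have b2 := Real.sq_sqrt (hpos x).le
      rw [← b2]
      rw [Real.sqrt_sq (hspos x).le]
      field_simp
    have e1 := (d2.const_mul c)
    have ex := ((ed.self_of_nhds.const_mul c).exp)
    have num := (f2.mul s1).sub (ef.self_of_nhds.mul ((ex.mul e1).div (s1.const_mul 2)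
      (mul_pos two_pos (hspos 0)).ne'))
    have tot := num.div ((ex.const_add 1).const_mul (Real.sqrt (1 + Real.exp (c * d 0))))
      (mul_pos (hspos 0) (hpos 0)).ne'
    rw [iteratedDeriv_succ, iteratedDeriv_one, eG.deriv_eq]
    refine tot.deriv.trans ?_
    simp only [Pi.mul_apply, Pi.sub_apply, Pi.div_apply, hf0, hf1]
    have b2 := Real.sq_sqrt (hpos 0).le
    have b := hspos 0
    generalize Real.sqrt (1 + Real.exp (c * d 0)) = s at *
    have hE : Real.exp (c * d 0) = s ^ 2 - 1 := by linarith
    rw [hE]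
    have : 1 + (s ^ 2 - 1) = s ^ 2 := by ring
    rw [this]
    field_simp
    ring

/-- Two-level approximation of the fidelity between neighboring thermal states:
with sector ground-state overlaps `F₀⁺, F₀⁻` (second derivative `−χ₀±` at `0`, value `1`,
first derivative `0`) and a differentiable gap function `Δ(δ)` with `Δ(0) = Δ`, the function
`F(δ) = F₀⁺(δ)/[√(1+e^{-βΔ})√(1+e^{-βΔ(δ)})] + F₀⁻(δ)/[√(1+e^{βΔ})√(1+e^{βΔ(δ)})]`
satisfies `F(0) = 1` and
`−F''(0) = χ₀⁺/(1+e^{-βΔ}) + χ₀⁻/(1+e^{βΔ}) + R` with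
`R = β²Δ'(0)² [e^{βΔ}/(2(e^{βΔ}+1)²) − 3e^{βΔ}/(4(e^{βΔ}+1)³)
  + e^{-βΔ}/(2(e^{-βΔ}+1)²) − 3e^{-βΔ}/(4(e^{-βΔ}+1)³)]`. -/
theorem tla_fidelity_second_derivative (β Δ χp χm : ℝ) (hβ : 0 < β) (hΔ : 0 < Δ)
    (F0p F0m Δfun : ℝ → ℝ)
    (hF0p : ContDiffAt ℝ 2 F0p 0) (hF0m : ContDiffAt ℝ 2 F0m 0)
    (hΔfun : ContDiffAt ℝ 2 Δfun 0)
    (hF0p0 : F0p 0 = 1) (hF0m0 : F0m 0 = 1)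
    (hF0p1 : deriv F0p 0 = 0) (hF0m1 : deriv F0m 0 = 0)
    (hF0p2 : iteratedDeriv 2 F0p 0 = -χp) (hF0m2 : iteratedDeriv 2 F0m 0 = -χm)
    (hΔ0 : Δfun 0 = Δ) :
    let F : ℝ → ℝ := fun δ =>
      F0p δ / (Real.sqrt (1 + Real.exp (-β * Δ)) * Real.sqrt (1 + Real.exp (-β * Δfun δ))) +
      F0m δ / (Real.sqrt (1 + Real.exp (β * Δ)) * Real.sqrt (1 + Real.exp (β * Δfun δ)))
    F 0 = 1 ∧
    -(iteratedDeriv 2 F 0) =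
      χp / (1 + Real.exp (-β * Δ)) + χm / (1 + Real.exp (β * Δ)) +
      β ^ 2 * (deriv Δfun 0) ^ 2 *
        (Real.exp (β * Δ) / (2 * (Real.exp (β * Δ) + 1) ^ 2) -
         3 * Real.exp (β * Δ) / (4 * (Real.exp (β * Δ) + 1) ^ 3) +
         Real.exp (-β * Δ) / (2 * (Real.exp (-β * Δ) + 1) ^ 2) -
         3 * Real.exp (-β * Δ) / (4 * (Real.exp (-β * Δ) + 1) ^ 3)) := by
  intro F
  obtain ⟨p1, p2, p3⟩ := tla_term (-β) χp F0p Δfun hF0p hΔfun hF0p0 hF0p1 hF0p2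
  obtain ⟨m1, m2, m3⟩ := tla_term β χm F0m Δfun hF0m hΔfun hF0m0 hF0m1 hF0m2
  rw [hΔ0] at p1 p2 p3 m1 m2 m3
  have hE : Real.exp (-β * Δ) = (Real.exp (β * Δ))⁻¹ := by
    rw [← Real.exp_neg]; ring_nf
  have hx := Real.exp_pos (β * Δ)
  constructor
  · refine (congrArg₂ (· + ·) p2 m2).trans ?_
    simp only [hE]
    generalize Real.exp (β * Δ) = x at *
    field_simp
    ring
  · have h := iteratedDeriv_fun_add p1 m1
    have h' : iteratedDeriv 2 F 0 = _ := h
    rw [h', p3, m3]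
    simp only [hE]
    generalize Real.exp (β * Δ) = x at *
    field_simp
    ring
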